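/- arXiv:1812.11414 — 4 statements merged into one kernel-verified Lean document; each statement's English description precedes it below -/
import Mathlib

section
/- Let λ denote the measure on (0,∞) with density 1/ε with respect to Lebesgue measure (the Haar measure of the multiplicative group of positive reals). For all real numbers a > 0, b ≠ 0, γ with 0 < γ < |b|, and σ ≠ 0, one has λ({ε ∈ (0,∞) : |a ε^σ + b| < γ}) ≤ 2γ / (|σ| (|b| − γ)). -/
/-! The measure `haarPos` is the image of Lebesgue measure under `exp`, so the interval
`[exp u, exp v]` has measure `v - u`. If `b > 0` no `ε > 0` satisfies the inequality, since
`a ε ^ σ + b > b > γ`. If `b < 0`, the inequality says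
`|b| - γ < a ε ^ σ < |b| + γ`; taking logarithms, `log ε` lies in an interval of length
`(log (|b| + γ) - log (|b| - γ)) / |σ|`, and `log x ≤ x - 1` at `x = (|b| + γ) / (|b| - γ)`
bounds this length by `2γ / (|σ| (|b| - γ))`. -/

open MeasureTheory

/-- The measure `λ` on `(0,∞)` with density `1/ε` with respect to Lebesgue measure. -/
noncomputable def haarPos : MeasureTheory.Measure ℝ :=
  (MeasureTheory.volume.restrict (Set.Ioi (0 : ℝ))).withDensity fun ε => ENNReal.ofReal ε⁻¹

lemma haarPos_Icc_exp (u v : ℝ) (huv : u ≤ v) :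
    haarPos (Set.Icc (Real.exp u) (Real.exp v)) = ENNReal.ofReal (v - u) := by
  have hu := Real.exp_pos u
  have hle : Real.exp u ≤ Real.exp v := Real.exp_le_exp.2 huv
  have hsub : Set.Icc (Real.exp u) (Real.exp v) ⊆ Set.Ioi 0 := fun x hx => hu.trans_le hx.1
  have hint : IntegrableOn (fun x : ℝ => x⁻¹) (Set.Icc (Real.exp u) (Real.exp v)) :=
    (continuousOn_inv₀.mono fun x hx => (hsub hx).ne').integrableOn_Icc
  rw [haarPos, withDensity_apply _ measurableSet_Icc,
    Measure.restrict_restrict measurableSet_Icc, Set.inter_eq_left.2 hsub,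
    ← ofReal_integral_eq_lintegral_ofReal hint]
  · rw [integral_Icc_eq_integral_Ioc, ← intervalIntegral.integral_of_le hle,
      integral_inv_of_pos hu (Real.exp_pos v), ← Real.exp_sub, Real.log_exp]
  · filter_upwards [ae_restrict_mem measurableSet_Icc] with x hx
    exact inv_nonneg.2 (hsub hx).le

lemma ae_haarPos_pos : ∀ᵐ ε ∂haarPos, 0 < ε :=
  (withDensity_absolutelyContinuous _ _).ae_le (ae_restrict_mem measurableSet_Ioi)

/-- For `a > 0`, `b ≠ 0`, `0 < γ < |b|` and `σ ≠ 0`, the Haar measure of the set of `ε > 0`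
such that `|a ε^σ + b| < γ` is at most `2γ/(|σ|(|b| - γ))`. -/
theorem haarPos_abs_rpow_add_lt (a b γ σ : ℝ) (ha : 0 < a) (hb : b ≠ 0)
    (hγ : 0 < γ) (hγb : γ < |b|) (hσ : σ ≠ 0) :
    haarPos {ε : ℝ | |a * ε ^ σ + b| < γ} ≤
      ENNReal.ofReal (2 * γ / (|σ| * (|b| - γ))) := by
  have hσ' : 0 < |σ| := abs_pos.2 hσ
  have hd : 0 < |b| - γ := sub_pos.2 hγb
  -- The interval for `log ε` is centred at `c`, with half-length `r / |σ|`; the form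
  -- `|log ε - c| ≤ r / |σ|` treats both signs of `σ` at once.
  set r := (Real.log (|b| + γ) - Real.log (|b| - γ)) / 2 with hr
  set c := ((Real.log (|b| + γ) + Real.log (|b| - γ)) / 2 - Real.log a) / σ with hc
  have hr0 : 0 ≤ r := by
    have := Real.log_le_log hd (show |b| - γ ≤ |b| + γ by linarith)
    rw [hr]; linarith
  have hr1 : 2 * r ≤ 2 * γ / (|b| - γ) := by
    have h := Real.log_le_sub_one_of_pos (show 0 < (|b| + γ) / (|b| - γ) by positivity)
    rw [Real.log_div (by positivity) hd.ne'] at h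
    have e : (|b| + γ) / (|b| - γ) - 1 = 2 * γ / (|b| - γ) := by
      field_simp
      ring
    rw [hr]; linarith
  have hρ : 0 ≤ r / |σ| := by positivity
  calc haarPos {ε : ℝ | |a * ε ^ σ + b| < γ}
      ≤ haarPos (Set.Icc (Real.exp (c - r / |σ|)) (Real.exp (c + r / |σ|))) := by
        apply measure_mono_ae
        filter_upwards [ae_haarPos_pos] with ε hε h
        change |a * ε ^ σ + b| < γ at h
        have hp : 0 < a * ε ^ σ := by positivity
        obtain ⟨h1, h2⟩ := abs_lt.1 h
        have hbneg : b < 0 := by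
          by_contra! hb0
          rw [abs_of_nonneg hb0] at hγb
          linarith
        have hbabs : |b| = -b := abs_of_neg hbneg
        have hlog : Real.log (a * ε ^ σ) = Real.log a + σ * Real.log ε := by
          rw [Real.log_mul ha.ne' (Real.rpow_pos_of_pos hε σ).ne', Real.log_rpow hε]
        have l1 := Real.log_le_log hd (show |b| - γ ≤ a * ε ^ σ by linarith)
        have l2 := Real.log_le_log hp (show a * ε ^ σ ≤ |b| + γ by linarith)
        rw [hlog] at l1 l2
        have key : |Real.log ε - c| ≤ r / |σ| := by
          rw [le_div_iff₀ hσ', ← abs_mul]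
          have e : (Real.log ε - c) * σ = σ * Real.log ε -
              ((Real.log (|b| + γ) + Real.log (|b| - γ)) / 2 - Real.log a) := by
            rw [hc, sub_mul, div_mul_cancel₀ _ hσ]
            ring
          rw [e, abs_le, hr]
          constructor <;> linarith
        obtain ⟨k1, k2⟩ := abs_le.1 key
        exact ⟨(Real.le_log_iff_exp_le hε).1 (by linarith),
          (Real.log_le_iff_le_exp hε).1 (by linarith)⟩
    _ = ENNReal.ofReal (2 * r / |σ|) := by
        rw [haarPos_Icc_exp _ _ (by linarith)]
        congr 1
        ring
    _ ≤ ENNReal.ofReal (2 * γ / (|σ| * (|b| - γ))) := by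
        apply ENNReal.ofReal_le_ofReal
        rw [mul_comm |σ|, ← div_div]
        gcongr
end

section
/- Let m ≥ 1 and let k = ((δ_1,a_1),…,(δ_{2m},a_{2m})) be an irreducible multi-index of length 2m. Then there exists an integer a* with −3m < a* < 3m and a* ∉ {a_1,…,a_{2m}} such that |Σ_{α=1}^{2m} δ_α/(a* − a_α)²| ≥ (6m)^{−4m} ∏_{α=1}^{2m} ⟨a_α⟩^{−2}. -/
/-!
Put `f(x) = ∑ δ_α / (x - a_α)²` and let `S` be the set of values of the modes. Multiplying by
`∏_{b ∈ S} (x - b)²` turns `f` into an integer polynomial `P` (`numPoly`) of degree at most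
`2|S| - 2`. At a mode `b` only the terms with `a_α = b` survive in `P(b)`; they carry the same sign,
because no action pair occurs, so `P(b) ≠ 0` and `P` is not the zero polynomial
(`numPoly_ne_zero`). The roots of `P` and the modes together number at most `3|S| - 2 ≤ 6m - 2`,
whereas `(-3m, 3m)` contains `6m - 1` integers. At an integer `x` of this interval that is neither
a root nor a mode, `|P(x)| ≥ 1`, and `(x - b)² ≤ (6m)² ⟨b⟩²` bounds the denominator.
-/

open scoped BigOperators ENNReal
open MeasureTheory ProbabilityTheory

/-- Japanese bracket `⟨a⟩ = √(1+a²)`. -/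
noncomputable def jap (a : ℤ) : ℝ := Real.sqrt (1 + (a : ℝ) ^ 2)

/-- A multi-index of length `2m`: signs `δ_α ∈ {±1}` and integer modes `a_α`. -/
structure MIdx (m : ℕ) where
  δ : Fin (2 * m) → ℤ
  a : Fin (2 * m) → ℤ
  hδ : ∀ α, δ α = 1 ∨ δ α = -1

/-- Irreducibility of a multi-index: the three zero-momentum conditions and the
absence of any action pair. -/
def MIdx.Irr {m : ℕ} (k : MIdx m) : Prop :=
  (∑ α, k.δ α) = 0 ∧ (∑ α, k.δ α * k.a α) = 0 ∧
    (∑ α, k.δ α * (k.a α) ^ 2) = 0 ∧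
    ∀ α β, α ≠ β → ¬(k.a α = k.a β ∧ k.δ α = -k.δ β)

/-- `⟨μ_min(k)⟩`, the smallest Japanese bracket among the modes of `k`. -/
noncomputable def muMin {m : ℕ} (k : MIdx m) : ℝ := ⨅ α, jap (k.a α)

/-- `⟨μ₁(k)⟩`, the largest Japanese bracket among the modes of `k`. -/
noncomputable def muMax {m : ℕ} (k : MIdx m) : ℝ := ⨆ α, jap (k.a α)

/-- The small denominator `ω_k(I) = -c₁ Σ δ_α I_{a_α}`. -/
noncomputable def omegaF (c₁ : ℝ) {m : ℕ} (k : MIdx m) (I : ℤ → ℝ) : ℝ :=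
  -c₁ * ∑ α, (k.δ α : ℝ) * I (k.a α)

/-- The small denominator `Ω̃_k(I)`. -/
noncomputable def tOmegaF (c₁ : ℝ) {m : ℕ} (k : MIdx m) (I : ℤ → ℝ) : ℝ :=
  omegaF c₁ k I -
    c₁ ^ 2 / 2 * ∑ α, (k.δ α : ℝ) *
      ∑' b : ℤ, if ∀ β, b ≠ k.a β then I b ^ 2 / ((k.a α - b : ℤ) : ℝ) ^ 2 else 0

open Polynomial in
/-- The numerator of `∑ δ_α / (X - a_α)²` over the common denominator `∏ (X - b)²`, where `b` runs
over the distinct values of the modes, each taken once. -/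
noncomputable def numPoly {m : ℕ} (k : MIdx m) : ℤ[X] :=
  ∑ α, C (k.δ α) * ∏ b ∈ (Finset.univ.image k.a).erase (k.a α), (X - C b) ^ 2

lemma numPoly_eval {m : ℕ} (k : MIdx m) (x : ℤ) :
    (numPoly k).eval x =
      ∑ α, k.δ α * ∏ b ∈ (Finset.univ.image k.a).erase (k.a α), (x - b) ^ 2 := by
  simp [numPoly, Polynomial.eval_finsetSum, Polynomial.eval_prod]

/-- `numPoly` does not vanish at a mode, as the terms surviving there all have the same sign. -/
lemma numPoly_ne_zero {m : ℕ} (hm : 1 ≤ m) (k : MIdx m) (hk : k.Irr) : numPoly k ≠ 0 := by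
  intro h0
  let α₀ : Fin (2 * m) := ⟨0, by omega⟩
  have h := numPoly_eval k (k.a α₀)
  have hterm : ∀ α, k.δ α * ∏ b ∈ (Finset.univ.image k.a).erase (k.a α), (k.a α₀ - b) ^ 2 =
      if k.a α = k.a α₀ then
        k.δ α₀ * ∏ b ∈ (Finset.univ.image k.a).erase (k.a α₀), (k.a α₀ - b) ^ 2 else 0 := by
    intro α
    split_ifs with hα
    · have hδ : k.δ α = k.δ α₀ := by
        by_cases hne : α = α₀
        · rw [hne]
        · have h1 := hk.2.2.2 α α₀ hne
          have h2 := k.hδ α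
          have h3 := k.hδ α₀
          have h4 : k.δ α ≠ -k.δ α₀ := fun h => h1 ⟨hα, h⟩
          omega
      rw [hδ, hα]
    · rw [Finset.prod_eq_zero (i := k.a α₀), mul_zero]
      · exact Finset.mem_erase.2 ⟨fun h => hα h.symm, by simp⟩
      · simp
  rw [h0, Polynomial.eval_zero, Finset.sum_congr rfl fun α _ => hterm α, ← Finset.sum_filter,
    Finset.sum_const, nsmul_eq_mul] at h
  have hcard : ((Finset.univ.filter fun α => k.a α = k.a α₀).card : ℤ) ≠ 0 := by
    exact_mod_cast (Finset.card_pos.2 ⟨α₀, by simp⟩).ne'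
  have hδ₀ : k.δ α₀ ≠ 0 := by
    have := k.hδ α₀
    omega
  have hprod : ∏ b ∈ (Finset.univ.image k.a).erase (k.a α₀), (k.a α₀ - b) ^ 2 ≠ 0 :=
    Finset.prod_ne_zero_iff.2 fun b hb =>
      pow_ne_zero 2 (sub_ne_zero.2 (Finset.ne_of_mem_erase hb).symm)
  exact mul_ne_zero hcard (mul_ne_zero hδ₀ hprod) h.symm

lemma numPoly_natDegree_le {m : ℕ} (k : MIdx m) :
    (numPoly k).natDegree ≤ 2 * ((Finset.univ.image k.a).card - 1) := by
  refine Polynomial.natDegree_sum_le_of_forall_le _ _ fun α _ => ?_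
  refine (Polynomial.natDegree_C_mul_le _ _).trans ?_
  refine (Polynomial.natDegree_prod_le _ _).trans ?_
  rw [← Finset.card_erase_of_mem (Finset.mem_image_of_mem k.a (Finset.mem_univ α))]
  simp [-eq_intCast, mul_comm]

/-- There are more integers in `(-3m, 3m)` than roots of `numPoly` and modes together. -/
lemma exists_astar {m : ℕ} (hm : 1 ≤ m) (k : MIdx m) (hk : k.Irr) :
    ∃ x : ℤ, -(3 * (m : ℤ)) < x ∧ x < 3 * m ∧ (∀ α, x ≠ k.a α) ∧ (numPoly k).eval x ≠ 0 := by
  have hS : (Finset.univ.image k.a).card ≤ 2 * m := by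
    simpa using Finset.card_image_le (s := Finset.univ) (f := k.a)
  have hroots : (numPoly k).roots.toFinset.card ≤ 2 * ((Finset.univ.image k.a).card - 1) :=
    (Multiset.toFinset_card_le _).trans
      ((Polynomial.card_roots' _).trans (numPoly_natDegree_le k))
  have hlt : ((numPoly k).roots.toFinset ∪ Finset.univ.image k.a).card <
      (Finset.Ioo (-(3 * (m : ℤ))) (3 * m)).card := by
    have := Finset.card_union_le (numPoly k).roots.toFinset (Finset.univ.image k.a)
    rw [Int.card_Ioo]
    omega
  obtain ⟨x, hx, hxn⟩ := Finset.exists_mem_notMem_of_card_lt_card hlt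
  rw [Finset.mem_Ioo] at hx
  simp only [Finset.mem_union, not_or, Multiset.mem_toFinset,
    Polynomial.mem_roots (numPoly_ne_zero hm k hk), Polynomial.IsRoot.def, Finset.mem_image,
    Finset.mem_univ, true_and, not_exists] at hxn
  exact ⟨x, hx.1, hx.2, fun α h => hxn.2 α h.symm, hxn.1⟩

lemma one_le_jap_sq (b : ℤ) : 1 ≤ jap b ^ 2 := by
  rw [jap, Real.sq_sqrt (by positivity)]
  nlinarith [sq_nonneg (b : ℝ)]

lemma sub_sq_le {m : ℕ} (hm : 1 ≤ m) {x : ℤ} (h1 : -(3 * (m : ℤ)) < x) (h2 : x < 3 * m)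
    (b : ℤ) : ((x : ℝ) - b) ^ 2 ≤ (6 * (m : ℝ)) ^ 2 * jap b ^ 2 := by
  rw [jap, Real.sq_sqrt (by positivity)]
  have hm' : (1 : ℝ) ≤ m := by exact_mod_cast hm
  have h1' : -(3 * (m : ℝ)) < x := by exact_mod_cast h1
  have h2' : (x : ℝ) < 3 * m := by exact_mod_cast h2
  have hx : (x : ℝ) ^ 2 ≤ (3 * m) ^ 2 := sq_le_sq' h1'.le h2'.le
  nlinarith [sq_nonneg ((x : ℝ) + b), sq_nonneg (b : ℝ), mul_nonneg (sq_nonneg (b : ℝ))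
    (by nlinarith : (0 : ℝ) ≤ (m : ℝ) ^ 2 - 1)]

/-- Algebraic lemma: for an irreducible multi-index `k` of length `2m` there is an integer
`a*` with `-3m < a* < 3m` avoiding the modes of `k` such that
`|Σ_α δ_α/(a* - a_α)²| ≥ (6m)^{-4m} ∏_α ⟨a_α⟩^{-2}`. -/
theorem exists_good_astar (m : ℕ) (hm : 1 ≤ m) (k : MIdx m) (hk : k.Irr) :
    ∃ astar : ℤ, -(3 * (m : ℤ)) < astar ∧ astar < 3 * m ∧ (∀ α, astar ≠ k.a α) ∧
      ((6 * (m : ℝ)) ^ (4 * m))⁻¹ * (∏ α, jap (k.a α) ^ 2)⁻¹ ≤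
        |∑ α, (k.δ α : ℝ) / ((astar - k.a α : ℤ) : ℝ) ^ 2| := by
  obtain ⟨x, h1, h2, hx, hP⟩ := exists_astar hm k hk
  refine ⟨x, h1, h2, hx, ?_⟩
  have hm' : (1 : ℝ) ≤ m := by exact_mod_cast hm
  set S := Finset.univ.image k.a with hS
  set D : ℝ := ∏ b ∈ S, ((x : ℝ) - b) ^ 2 with hD
  have hne : ∀ α, (x : ℝ) - k.a α ≠ 0 := fun α => sub_ne_zero.2 (by exact_mod_cast hx α)
  have hDpos : 0 < D := by
    refine Finset.prod_pos fun b hb => ?_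
    obtain ⟨α, -, rfl⟩ := Finset.mem_image.1 hb
    exact sq_pos_of_ne_zero (hne α)
  have hfP : (∑ α, (k.δ α : ℝ) / ((x - k.a α : ℤ) : ℝ) ^ 2) = ((numPoly k).eval x : ℤ) / D := by
    rw [eq_div_iff hDpos.ne', numPoly_eval, Finset.sum_mul]
    push_cast
    refine Finset.sum_congr rfl fun α _ => ?_
    rw [hD, ← Finset.mul_prod_erase S _ (Finset.mem_image_of_mem k.a (Finset.mem_univ α))]
    have := hne α
    field_simp
    rfl
  have hP1 : (1 : ℝ) ≤ |(((numPoly k).eval x : ℤ) : ℝ)| := by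
    exact_mod_cast Int.one_le_abs hP
  have hg : ∀ b : ℤ, 1 ≤ (6 * (m : ℝ)) ^ 2 * jap b ^ 2 := fun b =>
    one_le_mul_of_one_le_of_one_le (one_le_pow₀ (by linarith)) (one_le_jap_sq b)
  have hDle : D ≤ (6 * (m : ℝ)) ^ (4 * m) * ∏ α, jap (k.a α) ^ 2 := by
    calc D ≤ ∏ b ∈ S, (6 * (m : ℝ)) ^ 2 * jap b ^ 2 :=
          Finset.prod_le_prod (fun _ _ => sq_nonneg _) fun b _ => sub_sq_le hm h1 h2 b
      _ ≤ ∏ b ∈ S, ((6 * (m : ℝ)) ^ 2 * jap b ^ 2) ^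
            (Finset.univ.filter fun α => k.a α = b).card := by
          refine Finset.prod_le_prod (fun b _ => zero_le_one.trans (hg b)) fun b hb => ?_
          obtain ⟨α, -, hα⟩ := Finset.mem_image.1 hb
          exact le_self_pow₀ (hg b) (Finset.card_pos.2 ⟨α, by simpa using hα⟩).ne'
      _ = ∏ α, (6 * (m : ℝ)) ^ 2 * jap (k.a α) ^ 2 :=
          (Finset.prod_comp (fun b => (6 * (m : ℝ)) ^ 2 * jap b ^ 2) k.a).symm
      _ = _ := by
          rw [Finset.prod_mul_distrib, Finset.prod_const, Finset.card_univ, Fintype.card_fin,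
            ← pow_mul]
          congr 2
          ring
  rw [hfP, abs_div, abs_of_pos hDpos, ← mul_inv, ← one_div]
  exact div_le_div₀ (abs_nonneg _) hP1 hDpos hDle
end

section
/- Let r ≥ 1 be an integer, s > 1 and c₁ ≠ 0. There exists a constant C > 0 such that for every γ > 0, every ν ∈ (0,1) and every I : ℤ → [0,∞) with Σ_{b∈ℤ} I_b < ∞ satisfying, for every irreducible multi-index k of length 2m ≤ 2r, |ω_k(I)| ≥ (γ/ν) (∏_{α=1}^{2m} ⟨a_α⟩^{−2}) ⟨μ_min(k)⟩^{−2s} and |Ω̃_k(I) − ω_k(I)| ≥ (γ/ν) ∏_{α=1}^{2m} ⟨a_α⟩^{−4}, one has λ( { ε ∈ (0,∞) : there exists an irreducible multi-index k of length 2m ≤ 2r with |ω_k(ε²I)| ≤ γ ε² (∏_{α=1}^{2m} ⟨a_α⟩^{−2}) ⟨μ_min(k)⟩^{−2s} or |Ω̃_k(ε²I)| ≤ γ (∏_{α=1}^{2m} ⟨a_α⟩^{−6}) max(ε² ⟨μ_min(k)⟩^{−2s}, ε⁴) } ) ≤ C ν/(1−ν), where ε²I denotes the scaled actions a ↦ ε²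 I_a. -/
/-! Scaling gives `ω_k(ε²I) = ε² ω` and `Ω̃_k(ε²I) = ε² ω + ε⁴ D`, where `ω = ω_k(I)` and
`D = Ω̃_k(I) - ω_k(I)`. The first alternative in the resonant set is incompatible with the lower
bound on `|ω|`, because `ν < 1`. With `Q = ∏ ⟨a_α⟩⁻²` and `η = ν Q`, the lower bounds on `|ω|` and
`|D|` turn the second alternative into `||ω| - ε²|D|| ≤ η max(|ω|, ε²|D|)`, which confines `ε` to an
interval `[u, u/(1-η)]` with `u > 0`. Since `1/ε ≤ 1/u` there, its `λ`-measure is at most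
`η/(1-η) ≤ ν Q/(1-ν)` (`haarPos_resonant_le`). Finally `Q` is summable over all multi-indices of
length `2m`, since `∑ ∏ ⟨a_α⟩⁻²` factors as a power of `∑ ⟨a⟩⁻²` (`tsum_weight_ne_top`). The
constant `C` comes from adding these finitely many sums, `1 ≤ m ≤ r`. -/

open scoped BigOperators ENNReal
open MeasureTheory ProbabilityTheory

lemma one_le_jap (a : ℤ) : 1 ≤ jap a := by
  unfold jap
  exact Real.one_le_sqrt.mpr (by nlinarith [sq_nonneg (a : ℝ)])

lemma one_le_muMin {m : ℕ} (hm : 1 ≤ m) (k : MIdx m) : 1 ≤ muMin k := by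
  have : Nonempty (Fin (2 * m)) := ⟨⟨0, by omega⟩⟩
  exact le_ciInf fun α => one_le_jap _

/-- The weight `∏ ⟨a_α⟩⁻²` of a multi-index. -/
noncomputable def weight {m : ℕ} (k : MIdx m) : ℝ := ∏ α, jap (k.a α) ^ (-2 : ℝ)

lemma weight_pos {m : ℕ} (k : MIdx m) : 0 < weight k :=
  Finset.prod_pos fun _ _ => Real.rpow_pos_of_pos (by linarith [one_le_jap (k.a ‹_›)]) _

lemma weight_le_one {m : ℕ} (k : MIdx m) : weight k ≤ 1 :=
  Finset.prod_le_one
    (fun α _ => Real.rpow_nonneg (by linarith [one_le_jap (k.a α)]) _)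
    (fun α _ => Real.rpow_le_one_of_one_le_of_nonpos (one_le_jap _) (by norm_num))

lemma prod_jap_neg_four {m : ℕ} (k : MIdx m) :
    ∏ α, jap (k.a α) ^ (-4 : ℝ) = weight k ^ 2 := by
  unfold weight
  rw [← Finset.prod_pow]
  refine Finset.prod_congr rfl fun α _ => ?_
  rw [← Real.rpow_mul_natCast (by linarith [one_le_jap (k.a α)])]
  norm_num

lemma prod_jap_neg_six {m : ℕ} (k : MIdx m) :
    ∏ α, jap (k.a α) ^ (-6 : ℝ) = weight k ^ 3 := by
  unfold weight
  rw [← Finset.prod_pow]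
  refine Finset.prod_congr rfl fun α _ => ?_
  rw [← Real.rpow_mul_natCast (by linarith [one_le_jap (k.a α)])]
  norm_num

lemma omegaF_scale (c₁ : ℝ) {m : ℕ} (k : MIdx m) (I : ℤ → ℝ) (ε : ℝ) :
    (omegaF c₁ k fun a => ε ^ 2 * I a) = ε ^ 2 * omegaF c₁ k I := by
  unfold omegaF
  rw [mul_left_comm, Finset.mul_sum (a := ε ^ 2)]
  congr 1
  exact Finset.sum_congr rfl fun α _ => by ring

lemma tOmegaF_scale (c₁ : ℝ) {m : ℕ} (k : MIdx m) (I : ℤ → ℝ) (ε : ℝ) :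
    (tOmegaF c₁ k fun a => ε ^ 2 * I a) =
      ε ^ 2 * omegaF c₁ k I + ε ^ 4 * (tOmegaF c₁ k I - omegaF c₁ k I) := by
  -- Pulling a constant out of `∑'` needs no summability in a division ring.
  have h : ∀ α, (∑' b : ℤ, if ∀ β, b ≠ k.a β then
        (ε ^ 2 * I b) ^ 2 / ((k.a α - b : ℤ) : ℝ) ^ 2 else 0) =
      ε ^ 4 * ∑' b : ℤ, if ∀ β, b ≠ k.a β then I b ^ 2 / ((k.a α - b : ℤ) : ℝ) ^ 2 else 0 := by
    intro α
    rw [← tsum_mul_left]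
    refine tsum_congr fun b => ?_
    split_ifs
    · ring
    · simp
  unfold tOmegaF
  simp only [h, omegaF_scale]
  have hsum : ∀ f : Fin (2 * m) → ℝ, ∑ α, (k.δ α : ℝ) * (ε ^ 4 * f α) =
      ε ^ 4 * ∑ α, (k.δ α : ℝ) * f α := fun f => by
    rw [Finset.mul_sum]
    exact Finset.sum_congr rfl fun α _ => by ring
  rw [hsum]
  ring

lemma haarPos_Iic : haarPos (Set.Iic (0 : ℝ)) = 0 := by
  refine withDensity_absolutelyContinuous _ _ ?_
  rw [Measure.restrict_apply measurableSet_Iic, Set.Iic_inter_Ioi, Set.Ioc_self, measure_empty]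

lemma haarPos_Icc_le {u v : ℝ} (hu : 0 < u) :
    haarPos (Set.Icc u v) ≤ ENNReal.ofReal (u⁻¹ * (v - u)) := by
  unfold haarPos
  rw [withDensity_apply _ measurableSet_Icc, Measure.restrict_restrict measurableSet_Icc,
    Set.inter_eq_left.mpr (show Set.Icc u v ⊆ Set.Ioi 0 from fun x hx => lt_of_lt_of_le hu hx.1)]
  calc ∫⁻ ε in Set.Icc u v, ENNReal.ofReal ε⁻¹
      ≤ ∫⁻ _ε in Set.Icc u v, ENNReal.ofReal u⁻¹ :=
        setLIntegral_mono measurable_const fun x hx =>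
          ENNReal.ofReal_le_ofReal (inv_anti₀ hu hx.1)
    _ = ENNReal.ofReal (u⁻¹ * (v - u)) := by
        rw [setLIntegral_const, Real.volume_Icc, ENNReal.ofReal_mul (inv_nonneg.mpr hu.le)]

/-- The quantities `A` and `ε²B` are within a relative distance `η` only for `ε` in an interval
`[u, u/(1-η)]`. -/
lemma haarPos_resonant_le {A B η : ℝ} (hA : 0 < A) (hB : 0 < B) (hη : η < 1) :
    haarPos {ε : ℝ | 0 < ε ∧ |A - ε ^ 2 * B| ≤ η * max A (ε ^ 2 * B)} ≤
      ENNReal.ofReal (η / (1 - η)) := by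
  have h1 : 0 < 1 - η := by linarith
  set u := Real.sqrt (A / B * (1 - η)) with hu_def
  have hT : 0 < A / B * (1 - η) := by positivity
  have hu : 0 < u := Real.sqrt_pos.mpr hT
  have hu2 : u ^ 2 * B = A * (1 - η) := by
    rw [hu_def, Real.sq_sqrt hT.le]; field_simp
  have hsub : {ε : ℝ | 0 < ε ∧ |A - ε ^ 2 * B| ≤ η * max A (ε ^ 2 * B)} ⊆
      Set.Icc u (u / (1 - η)) := by
    rintro ε ⟨hε, h⟩
    have hx : 0 < ε ^ 2 * B := by positivity
    have hη0 : 0 ≤ η := by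
      by_contra hn
      have hm : 0 < max A (ε ^ 2 * B) := lt_max_of_lt_left hA
      nlinarith [abs_nonneg (A - ε ^ 2 * B)]
    have key : A * (1 - η) ≤ ε ^ 2 * B ∧ ε ^ 2 * B * (1 - η) ≤ A := by
      have h' := abs_le.mp h
      rcases le_total A (ε ^ 2 * B) with hc | hc
      · rw [max_eq_right hc] at h'
        constructor <;> nlinarith [h'.1, h'.2]
      · rw [max_eq_left hc] at h'
        constructor <;> nlinarith [h'.1, h'.2]
    refine ⟨?_, ?_⟩
    · refine le_of_sq_le_sq ?_ hε.le
      exact le_of_mul_le_mul_right (by rw [hu2]; exact key.1) hB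
    · rw [le_div_iff₀ h1]
      refine le_of_sq_le_sq ?_ hu.le
      refine le_of_mul_le_mul_right (a := B) ?_ hB
      rw [hu2]
      nlinarith [key.2]
  refine (measure_mono hsub).trans ((haarPos_Icc_le hu).trans (le_of_eq ?_))
  congr 1
  field_simp
  ring

instance {m : ℕ} : Countable (MIdx m) :=
  Function.Injective.countable (f := fun k : MIdx m => (k.δ, k.a)) (by
    rintro ⟨δ, a, _⟩ ⟨δ', a', _⟩ h
    simp only [Prod.mk.injEq] at h
    obtain ⟨rfl, rfl⟩ := h
    rfl)

lemma tsum_pi_prod {β : Type*} (g : β → ℝ≥0∞) (n : ℕ) :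
    ∑' f : Fin n → β, ∏ i, g (f i) = (∑' b, g b) ^ n := by
  induction n with
  | zero => simp
  | succ n ih =>
    rw [← (Fin.consEquiv fun _ : Fin (n + 1) => β).tsum_eq, ENNReal.tsum_prod', pow_succ',
      ← ih, ← ENNReal.tsum_mul_right]
    refine tsum_congr fun b => ?_
    rw [← ENNReal.tsum_mul_left]
    refine tsum_congr fun f => ?_
    simp [Fin.consEquiv, Fin.prod_univ_succ]

lemma tsum_jap_ne_top : ∑' a : ℤ, ENNReal.ofReal (jap a ^ (-2 : ℝ)) ≠ ∞ := by
  have h : ∀ a : ℤ, jap a ^ (-2 : ℝ) = 1 / (1 + (a : ℝ) ^ 2) := by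
    intro a
    have hp : (0 : ℝ) ≤ 1 + (a : ℝ) ^ 2 := by positivity
    rw [Real.rpow_neg (by linarith [one_le_jap a])]
    rw [Real.rpow_two, one_div]
    unfold jap
    rw [Real.sq_sqrt hp]
  have hs : Summable fun a : ℤ => 1 / (1 + (a : ℝ) ^ 2) := by
    -- Only `a = 0` escapes the comparison with `1/a²`.
    refine Summable.of_norm_bounded_eventually
      (Real.summable_one_div_int_pow.mpr (one_lt_two)) ?_
    rw [Filter.eventually_cofinite]
    refine (Set.finite_singleton (0 : ℤ)).subset fun a ha => ?_
    by_contra hne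
    refine ha ?_
    have hne' : (a : ℝ) ≠ 0 := by exact_mod_cast hne
    have : 0 < (a : ℝ) ^ 2 := by positivity
    rw [Real.norm_of_nonneg (by positivity)]
    exact one_div_le_one_div_of_le this (by linarith)
  simp only [h]
  exact hs.tsum_ofReal_ne_top

lemma tsum_weight_ne_top (m : ℕ) : ∑' k : MIdx m, ENNReal.ofReal (weight k) ≠ ∞ := by
  let g : Bool × ℤ → ℝ≥0∞ := fun p => ENNReal.ofReal (jap p.2 ^ (-2 : ℝ))
  -- Recording each sign as a Boolean keeps the number of sign patterns finite.
  let e : MIdx m → (Fin (2 * m) → Bool × ℤ) := fun k α => (decide (k.δ α = 1), k.a α)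
  have he : Function.Injective e := by
    rintro ⟨δ, a, hδ⟩ ⟨δ', a', hδ'⟩ h
    have h1 : ∀ α, (δ α = 1 ↔ δ' α = 1) ∧ a α = a' α := fun α => by
      simpa [e] using congrFun h α
    have h2 : δ = δ' := funext fun α => by
      have := (h1 α).1
      rcases hδ α with h | h <;> rcases hδ' α with h' | h' <;> simp_all
    have h3 : a = a' := funext fun α => (h1 α).2
    subst h2 h3
    rfl
  have hle : ∑' k : MIdx m, ENNReal.ofReal (weight k) ≤
      ∑' f : Fin (2 * m) → Bool × ℤ, ∏ i, g (f i) := by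
    refine le_trans (le_of_eq (tsum_congr fun k => ?_))
      (ENNReal.tsum_comp_le_tsum_of_injective he fun f => ∏ i, g (f i))
    exact ENNReal.ofReal_prod_of_nonneg fun α _ =>
      Real.rpow_nonneg (by linarith [one_le_jap (k.a α)]) _
  refine ne_top_of_le_ne_top ?_ hle
  rw [tsum_pi_prod]
  refine ENNReal.pow_ne_top ?_
  rw [ENNReal.tsum_prod', tsum_bool]
  exact ENNReal.add_ne_top.mpr ⟨tsum_jap_ne_top, tsum_jap_ne_top⟩

/-- For `ε > 0`, a resonance at `k` forces `|ω|` and `ε²|D|` to be relatively close, where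
`ω = omegaF c₁ k I` and `D = tOmegaF c₁ k I - omegaF c₁ k I`. -/
lemma close_of_resonant {s c₁ γ ν : ℝ} (hγ : 0 < γ) (hν : 0 < ν) (hν1 : ν < 1) {m : ℕ}
    (hm : 1 ≤ m) (k : MIdx m) (I : ℤ → ℝ)
    (hω : γ / ν * (∏ α, jap (k.a α) ^ (-2 : ℝ)) * muMin k ^ (-(2 * s)) ≤ |omegaF c₁ k I|)
    (hD : γ / ν * (∏ α, jap (k.a α) ^ (-4 : ℝ)) ≤ |tOmegaF c₁ k I - omegaF c₁ k I|)
    {ε : ℝ} (hε : 0 < ε)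
    (h : |omegaF c₁ k fun a => ε ^ 2 * I a| ≤
              γ * ε ^ 2 * (∏ α, jap (k.a α) ^ (-2 : ℝ)) * muMin k ^ (-(2 * s)) ∨
            |tOmegaF c₁ k fun a => ε ^ 2 * I a| ≤
              γ * (∏ α, jap (k.a α) ^ (-6 : ℝ)) *
                max (ε ^ 2 * muMin k ^ (-(2 * s))) (ε ^ 4)) :
    abs (|omegaF c₁ k I| - ε ^ 2 * |tOmegaF c₁ k I - omegaF c₁ k I|) ≤
      ν * weight k *
        max |omegaF c₁ k I| (ε ^ 2 * |tOmegaF c₁ k I - omegaF c₁ k I|) := by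
  rw [prod_jap_neg_four] at hD
  rw [prod_jap_neg_six, omegaF_scale, tOmegaF_scale] at h
  change γ / ν * weight k * _ ≤ _ at hω
  change _ ≤ γ * ε ^ 2 * weight k * _ ∨ _ at h
  have hM : 0 < muMin k ^ (-(2 * s)) :=
    Real.rpow_pos_of_pos (by linarith [one_le_muMin hm k]) _
  have hQ := weight_pos k
  have hQ1 := weight_le_one k
  generalize muMin k ^ (-(2 * s)) = M at *
  generalize weight k = Q at *
  generalize omegaF c₁ k I = w at *
  generalize tOmegaF c₁ k I - w = D at *
  have hx : 0 < ε ^ 2 := by positivity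
  have hω' : γ * Q * M ≤ ν * |w| := by
    calc γ * Q * M = ν * (γ / ν * Q * M) := by field_simp
      _ ≤ _ := by gcongr
  have hD' : γ * Q ^ 2 ≤ ν * |D| := by
    calc γ * Q ^ 2 = ν * (γ / ν * Q ^ 2) := by field_simp
      _ ≤ _ := by gcongr
  have hpos : 0 < γ * Q * M := by positivity
  rcases h with h | h
  · exfalso
    rw [abs_mul, abs_of_pos hx] at h
    have h2 : |w| ≤ γ * Q * M := by
      refine le_of_mul_le_mul_left (a := ε ^ 2) ?_ hx
      linarith
    nlinarith
  · have e1 : ε ^ 2 * w + ε ^ 4 * D = ε ^ 2 * (w + ε ^ 2 * D) := by ring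
    have e2 : max (ε ^ 2 * M) (ε ^ 4) = ε ^ 2 * max M (ε ^ 2) := by
      rw [mul_max_of_nonneg _ _ hx.le]; congr 1; ring
    rw [e1, e2, abs_mul, abs_of_pos hx] at h
    have h2 : |w + ε ^ 2 * D| ≤ γ * Q ^ 3 * max M (ε ^ 2) := by
      refine le_of_mul_le_mul_left (a := ε ^ 2) ?_ hx
      linarith
    have h3 : abs (|w| - ε ^ 2 * |D|) ≤ |w + ε ^ 2 * D| := by
      have := abs_abs_sub_abs_le_abs_sub w (-(ε ^ 2 * D))
      rwa [abs_neg, abs_mul, abs_of_pos hx, sub_neg_eq_add] at this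
    refine h3.trans (h2.trans ?_)
    rw [mul_max_of_nonneg _ _ (by positivity), mul_max_of_nonneg _ _ (by positivity)]
    refine max_le_max ?_ ?_
    · calc γ * Q ^ 3 * M = Q ^ 2 * (γ * Q * M) := by ring
        _ ≤ Q * (ν * |w|) := by
            refine mul_le_mul ?_ hω' hpos.le hQ.le
            nlinarith
        _ = ν * Q * |w| := by ring
    · calc γ * Q ^ 3 * ε ^ 2 = Q * ε ^ 2 * (γ * Q ^ 2) := by ring
        _ ≤ Q * ε ^ 2 * (ν * |D|) := by gcongr
        _ = ν * Q * (ε ^ 2 * |D|) := by ring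

/-- Deterministic measure estimate: if the actions `I` satisfy the strong non-resonance
lower bounds with constant `γ/ν`, then the `λ`-measure of the set of `ε > 0` for which the
scaled actions `ε²I` are resonant is at most `C ν/(1-ν)`. -/
theorem haar_measure_resonant_eps_le (r : ℕ) (hr : 1 ≤ r) (s : ℝ) (hs : 1 < s)
    (c₁ : ℝ) (hc₁ : c₁ ≠ 0) :
    ∃ C > 0, ∀ γ : ℝ, 0 < γ → ∀ ν : ℝ, 0 < ν → ν < 1 →
      ∀ I : ℤ → ℝ, (∀ a, 0 ≤ I a) → Summable I →
      (∀ m : ℕ, 1 ≤ m → m ≤ r → ∀ k : MIdx m, k.Irr →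
        γ / ν * (∏ α, jap (k.a α) ^ (-2 : ℝ)) * muMin k ^ (-(2 * s)) ≤ |omegaF c₁ k I| ∧
        γ / ν * (∏ α, jap (k.a α) ^ (-4 : ℝ)) ≤ |tOmegaF c₁ k I - omegaF c₁ k I|) →
      haarPos {ε : ℝ | ∃ m : ℕ, 1 ≤ m ∧ m ≤ r ∧ ∃ k : MIdx m, k.Irr ∧
          (|omegaF c₁ k fun a => ε ^ 2 * I a| ≤
              γ * ε ^ 2 * (∏ α, jap (k.a α) ^ (-2 : ℝ)) * muMin k ^ (-(2 * s)) ∨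
            |tOmegaF c₁ k fun a => ε ^ 2 * I a| ≤
              γ * (∏ α, jap (k.a α) ^ (-6 : ℝ)) *
                max (ε ^ 2 * muMin k ^ (-(2 * s))) (ε ^ 4))} ≤
        ENNReal.ofReal (C * ν / (1 - ν)) := by
  set K : ℝ≥0∞ := ∑ m ∈ Finset.Icc 1 r, ∑' k : MIdx m, ENNReal.ofReal (weight k) with hK
  have hKtop : K ≠ ∞ := ENNReal.sum_ne_top.mpr fun m _ => tsum_weight_ne_top m
  refine ⟨K.toReal + 1, by positivity, ?_⟩
  intro γ hγ ν hν hν1 I _ _ hI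
  have h1ν : 0 < 1 - ν := by linarith
  let E : (m : ℕ) → MIdx m → Set ℝ := fun m k => {ε : ℝ | k.Irr ∧ 0 < ε ∧
    abs (|omegaF c₁ k I| - ε ^ 2 * |tOmegaF c₁ k I - omegaF c₁ k I|) ≤
      ν * weight k * max |omegaF c₁ k I| (ε ^ 2 * |tOmegaF c₁ k I - omegaF c₁ k I|)}
  have hE : ∀ m ∈ Finset.Icc 1 r, ∀ k : MIdx m,
      haarPos (E m k) ≤ ENNReal.ofReal (ν / (1 - ν)) * ENNReal.ofReal (weight k) := by
    intro m hm k
    obtain ⟨hm1, hmr⟩ := Finset.mem_Icc.mp hm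
    by_cases hk : k.Irr
    · obtain ⟨hω, hD⟩ := hI m hm1 hmr k hk
      have hM : 0 < muMin k ^ (-(2 * s)) :=
        Real.rpow_pos_of_pos (by linarith [one_le_muMin hm1 k]) _
      have hQ := weight_pos k
      have hQ1 := weight_le_one k
      rw [prod_jap_neg_four] at hD
      change γ / ν * weight k * _ ≤ _ at hω
      have hA : 0 < |omegaF c₁ k I| := lt_of_lt_of_le (by positivity) hω
      have hB : 0 < |tOmegaF c₁ k I - omegaF c₁ k I| := lt_of_lt_of_le (by positivity) hD
      have hη : ν * weight k ≤ ν := by nlinarith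
      rw [← ENNReal.ofReal_mul (by positivity)]
      refine (measure_mono fun ε hε => hε.2).trans
        ((haarPos_resonant_le hA hB (hη.trans_lt hν1)).trans (ENNReal.ofReal_le_ofReal ?_))
      rw [div_mul_eq_mul_div]
      gcongr
    · have : E m k = ∅ := Set.eq_empty_of_forall_notMem fun ε hε => hk hε.1
      simp [this]
  calc _ ≤ haarPos (Set.Iic 0 ∪ ⋃ m ∈ Finset.Icc 1 r, ⋃ k : MIdx m, E m k) := by
        refine measure_mono ?_
        rintro ε ⟨m, hm1, hmr, k, hk, h⟩
        rcases le_or_gt ε 0 with hε | hε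
        · exact Or.inl hε
        · refine Or.inr ?_
          simp only [Set.mem_iUnion]
          obtain ⟨hω, hD⟩ := hI m hm1 hmr k hk
          exact ⟨m, Finset.mem_Icc.mpr ⟨hm1, hmr⟩, k, hk, hε,
            close_of_resonant hγ hν hν1 hm1 k I hω hD hε h⟩
    _ ≤ haarPos (⋃ m ∈ Finset.Icc 1 r, ⋃ k : MIdx m, E m k) := by
        refine (measure_union_le _ _).trans ?_
        rw [haarPos_Iic, zero_add]
    _ ≤ ∑ m ∈ Finset.Icc 1 r, ∑' k : MIdx m,
          ENNReal.ofReal (ν / (1 - ν)) * ENNReal.ofReal (weight k) := by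
        refine (measure_biUnion_finset_le _ _).trans (Finset.sum_le_sum fun m hm => ?_)
        exact (measure_iUnion_le _).trans (ENNReal.tsum_le_tsum fun k => hE m hm k)
    _ = ENNReal.ofReal (ν / (1 - ν)) * K := by
        simp only [ENNReal.tsum_mul_left, ← Finset.mul_sum, hK]
    _ ≤ ENNReal.ofReal ((K.toReal + 1) * ν / (1 - ν)) := by
        rw [← ENNReal.ofReal_toReal hKtop, ← ENNReal.ofReal_mul (by positivity),
          ENNReal.toReal_ofReal ENNReal.toReal_nonneg]
        refine ENNReal.ofReal_le_ofReal ?_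
        rw [div_mul_eq_mul_div, mul_comm ν]
        gcongr
        linarith
end

section
/- Let f : ℝ → [0,∞) be a continuous function and y : ℝ → [0,∞) a differentiable function satisfying y'(t) ≤ 2 f(t) √(y(t)) for all t ∈ ℝ. Then for all t ≥ 0 one has √(y(t)) ≤ √(y(0)) + ∫₀ᵗ f(s) ds. -/
open MeasureTheory intervalIntegral

/-! Formally `(√y)' = y' / (2√y) ≤ f`, but `√y` need not be differentiable where `y` vanishes.
For `ε > 0` the regularization `√(y + ε²)` is differentiable everywhere, and its derivative
`y' / (2√(y + ε²))` is still at most `f` because `y' ≤ 2 f √y ≤ 2 f √(y + ε²)`. Comparing with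
`√(y 0 + ε²) + ∫₀ᵗ f` and using `√(y 0 + ε²) ≤ √(y 0) + ε` gives the bound up to `ε`, which is
arbitrary. -/

/-- Gronwall-type lemma: if `y ≥ 0` is differentiable with `y' ≤ 2 f √y` for a continuous
nonnegative `f`, then `√(y t) ≤ √(y 0) + ∫₀ᵗ f` for all `t ≥ 0`. -/
theorem sqrt_le_sqrt_add_integral (f y : ℝ → ℝ) (hf : Continuous f)
    (hfpos : ∀ t, 0 ≤ f t) (hy : Differentiable ℝ y) (hypos : ∀ t, 0 ≤ y t)
    (hineq : ∀ t, deriv y t ≤ 2 * f t * Real.sqrt (y t)) :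
    ∀ t : ℝ, 0 ≤ t → Real.sqrt (y t) ≤ Real.sqrt (y 0) + ∫ s in (0 : ℝ)..t, f s := by
  intro t ht
  refine le_of_forall_pos_le_add fun ε hε => ?_
  have hpos : ∀ x, 0 < y x + ε ^ 2 := fun x => add_pos_of_nonneg_of_pos (hypos x) (by positivity)
  have hg : ∀ x, HasDerivAt (fun x => √(y x + ε ^ 2)) (deriv y x / (2 * √(y x + ε ^ 2))) x :=
    fun x => ((hy x).hasDerivAt.add_const (ε ^ 2)).sqrt (hpos x).ne'
  have hB : ∀ x, HasDerivAt (fun x => √(y 0 + ε ^ 2) + ∫ s in (0 : ℝ)..x, f s) (f x) x :=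
    fun x => (hf.integral_hasStrictDerivAt 0 x).hasDerivAt.const_add _
  have hbound : ∀ x, deriv y x / (2 * √(y x + ε ^ 2)) ≤ f x := fun x => by
    have hs : 0 < √(y x + ε ^ 2) := Real.sqrt_pos.2 (hpos x)
    have hle : √(y x) ≤ √(y x + ε ^ 2) := Real.sqrt_le_sqrt (by nlinarith)
    rw [div_le_iff₀ (by positivity)]
    nlinarith [hineq x, mul_le_mul_of_nonneg_left hle (hfpos x)]
  have hcomp : √(y t + ε ^ 2) ≤ √(y 0 + ε ^ 2) + ∫ s in (0 : ℝ)..t, f s :=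
    image_le_of_deriv_right_le_deriv_boundary
      (fun x _ => (hg x).continuousAt.continuousWithinAt)
      (fun x _ => (hg x).hasDerivWithinAt) (by simp)
      (fun x _ => (hB x).continuousAt.continuousWithinAt)
      (fun x _ => (hB x).hasDerivWithinAt) (fun x _ => hbound x) (Set.right_mem_Icc.2 ht)
  have hleft : √(y t) ≤ √(y t + ε ^ 2) := Real.sqrt_le_sqrt (by nlinarith)
  have hright : √(y 0 + ε ^ 2) ≤ √(y 0) + ε := by
    refine Real.sqrt_le_iff.2 ⟨by positivity, ?_⟩
    nlinarith [Real.sq_sqrt (hypos 0), mul_nonneg (Real.sqrt_nonneg (y 0)) hε.le]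
  linarith
end
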